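/- arXiv:1602.02408 — 2 statements merged into one kernel-verified Lean document; each statement's English description precedes it below -/
import Mathlib

section
/- For nonempty compact intervals A and B in ℝ, there exists a nonempty compact interval C with A = B + C (Minkowski sum), i.e., the Hukuhara difference A −_H B exists, if and only if spr B ≤ spr A. -/
open Pointwise

/-- Existence of the Hukuhara difference: for nonempty compact intervals
`A = [a₁,a₂]` and `B = [b₁,b₂]`, there is a nonempty compact interval `C` with
`A = B + C` (Minkowski sum) iff `spr B ≤ spr A`. -/
theorem hukuhara_difference_exists_iff (a₁ a₂ b₁ b₂ : ℝ) (ha : a₁ ≤ a₂) (hb : b₁ ≤ b₂) :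
    (∃ c₁ c₂ : ℝ, c₁ ≤ c₂ ∧ Set.Icc a₁ a₂ = Set.Icc b₁ b₂ + Set.Icc c₁ c₂) ↔
      (b₂ - b₁) / 2 ≤ (a₂ - a₁) / 2 := by
  constructor
  · rintro ⟨c₁, c₂, hc, h⟩
    have h1 : b₁ + c₁ ∈ Set.Icc a₁ a₂ := by
      rw [h]
      exact Set.add_mem_add ⟨le_rfl, hb⟩ ⟨le_rfl, hc⟩
    have h2 : b₂ + c₁ ∈ Set.Icc a₁ a₂ := by
      rw [h]
      exact Set.add_mem_add ⟨hb, le_rfl⟩ ⟨le_rfl, hc⟩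
    linarith [h1.1, h2.2]
  · intro h
    refine ⟨a₁ - b₁, a₂ - b₂, by linarith, ?_⟩
    ext x
    rw [Set.mem_add]
    constructor
    · rintro ⟨hx1, hx2⟩
      rcases le_total x (a₁ - b₁ + b₂) with hx | hx
      · exact ⟨x - (a₁ - b₁), ⟨by linarith, by linarith⟩, a₁ - b₁,
          ⟨le_rfl, by linarith⟩, by ring⟩
      · exact ⟨b₂, ⟨hb, le_rfl⟩, x - b₂, ⟨by linarith, by linarith⟩, by ring⟩
    · rintro ⟨b, ⟨hb1, hb2⟩, c, ⟨hc1, hc2⟩, rfl⟩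
      exact ⟨by linarith, by linarith⟩
end

section
/- Let k ∈ ℕ, let m_i ∈ ℝ and s_i ≥ 0 for i = 1,…,k, let b₁, b₂, b₃, b₄ ∈ ℝ^k, and let E be a nonempty compact interval in ℝ. Define the nonempty compact interval Y as the Minkowski sum Y = Σᵢ b₁ᵢ•{m_i} + Σᵢ b₂ᵢ•(s_i•[−1,1]) + Σᵢ b₃ᵢ•(m_i•[−1,1]) + Σᵢ b₄ᵢ•{s_i} + E. Then mid Y = Σᵢ b₁ᵢ m_i + Σᵢ b₄ᵢ s_i + mid E and spr Y = Σᵢ |b₂ᵢ| s_i + Σᵢ |b₃ᵢ| |m_i| + spr E. -/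
open Pointwise

theorem smul_smul_unit (b c : ℝ) :
    b • (c • Set.Icc (-1 : ℝ) 1) = Metric.closedBall (0 : ℝ) (|b| * |c|) := by
  have h : Set.Icc (-1 : ℝ) 1 = Metric.closedBall 0 1 := by
    rw [Real.closedBall_eq_Icc]; norm_num
  rw [h, smul_smul, smul_closedBall _ _ zero_le_one]
  simp [abs_mul]

theorem sum_closedBall {ι : Type*} (t : Finset ι) (x r : ι → ℝ) (hr : ∀ i, 0 ≤ r i) :
    ∑ i ∈ t, Metric.closedBall (x i) (r i) =
      Metric.closedBall (∑ i ∈ t, x i) (∑ i ∈ t, r i) := by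
  classical
  induction t using Finset.induction_on with
  | empty => simp [← Set.singleton_zero]
  | insert a t ha ih =>
    rw [Finset.sum_insert ha, Finset.sum_insert ha, Finset.sum_insert ha, ih,
      closedBall_add_closedBall (hr a) (Finset.sum_nonneg fun i _ => hr i)]

theorem sum_smul_singleton {ι : Type*} (t : Finset ι) (b x : ι → ℝ) :
    ∑ i ∈ t, b i • ({x i} : Set ℝ) = Metric.closedBall (∑ i ∈ t, b i * x i) 0 := by
  have := sum_closedBall t (fun i => b i * x i) (fun _ => 0) (fun _ => le_rfl)
  simpa using this

/-- Mid/spread decomposition of the interval regression model: if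
`Y = Σᵢ b₁ᵢ•{mᵢ} + Σᵢ b₂ᵢ•(sᵢ•[−1,1]) + Σᵢ b₃ᵢ•(mᵢ•[−1,1]) + Σᵢ b₄ᵢ•{sᵢ} + E`
(Minkowski sums), then `mid Y = Σᵢ b₁ᵢ mᵢ + Σᵢ b₄ᵢ sᵢ + mid E` and
`spr Y = Σᵢ |b₂ᵢ| sᵢ + Σᵢ |b₃ᵢ| |mᵢ| + spr E`, i.e. `Y` is the compact interval
`[mid Y − spr Y, mid Y + spr Y]`. -/
theorem interval_regression_mid_spr (k : ℕ) (m s b₁ b₂ b₃ b₄ : Fin k → ℝ)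
    (hs : ∀ i, 0 ≤ s i) (e₁ e₂ : ℝ) (he : e₁ ≤ e₂) :
    (∑ i, b₁ i • ({m i} : Set ℝ)) + (∑ i, b₂ i • (s i • Set.Icc (-1 : ℝ) 1)) +
        (∑ i, b₃ i • (m i • Set.Icc (-1 : ℝ) 1)) + (∑ i, b₄ i • ({s i} : Set ℝ)) +
        Set.Icc e₁ e₂ =
      Set.Icc
        ((∑ i, b₁ i * m i + ∑ i, b₄ i * s i + (e₁ + e₂) / 2) -
          (∑ i, |b₂ i| * s i + ∑ i, |b₃ i| * |m i| + (e₂ - e₁) / 2))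
        ((∑ i, b₁ i * m i + ∑ i, b₄ i * s i + (e₁ + e₂) / 2) +
          (∑ i, |b₂ i| * s i + ∑ i, |b₃ i| * |m i| + (e₂ - e₁) / 2)) := by
  have hE : Set.Icc e₁ e₂ = Metric.closedBall ((e₁ + e₂) / 2) ((e₂ - e₁) / 2) :=
    Real.Icc_eq_closedBall _ _
  have h2 : 0 ≤ ∑ i, |b₂ i| * |s i| := Finset.sum_nonneg fun i _ => by positivity
  have h3 : 0 ≤ ∑ i, |b₃ i| * |m i| := Finset.sum_nonneg fun i _ => by positivity
  have h4 : 0 ≤ (e₂ - e₁) / 2 := by linarith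
  have hs' : ∑ i, |b₂ i| * s i = ∑ i, |b₂ i| * |s i| :=
    Finset.sum_congr rfl fun i _ => by rw [abs_of_nonneg (hs i)]
  simp only [smul_smul_unit]
  rw [hs', hE, ← Real.closedBall_eq_Icc, sum_smul_singleton, sum_smul_singleton,
    sum_closedBall _ _ _ (fun i => by positivity), sum_closedBall _ _ _ (fun i => by positivity),
    closedBall_add_closedBall le_rfl h2, closedBall_add_closedBall (by linarith) h3,
    closedBall_add_closedBall (by linarith) le_rfl, closedBall_add_closedBall (by linarith) h4]
  simp
end
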